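/- arXiv:math/0611401 — 2 statements merged into one kernel-verified Lean document; each statement's English description precedes it below -/
import Mathlib

section
/- Let M be a unital C*-algebra that is finite-dimensional as a complex vector space and let φ : M → M be a UP map. Then the multiplicative core C_φ is contained in the tail operator system M_∞. -/
/-!
On `C_φ` the map `φ` is an injective Jordan `*`-homomorphism, and this bounds preimages.

* Kadison's inequality `φ(a)² ≤ φ(a²)` for self-adjoint `a` follows from a spectral decomposition
  `a = ∑ λᵢ pᵢ`, since with `T = φ(a)` one has `φ(a²) - T² = ∑ (λᵢ - T) φ(pᵢ) (λᵢ - T) ≥ 0`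
  (`kadison`).
* Applying it to `t a + b` for all real `t` shows that `x ∈ M_φ` if and only if
  `φ(x ∘ b) = φ(x) ∘ φ(b)` for every `b` (`mem_definiteSet_iff`). Hence `M_φ` is a
  linear subspace; it is also stable under `x ↦ x* ∘ x`, because `φ(a⁴) = φ(a)⁴` for self-adjoint
  `a ∈ M_φ`. The same properties pass to `B_φ`.
* The decreasing subspaces `φⁿ(B_φ)` stabilize at some `C`, on which every `φⁿ` is surjective, hence
  bijective. For `x ∈ C` put `a = x* ∘ x ∈ C`. Then `‖x‖² ≤ 2 ‖a‖` and `‖φⁿ(a)‖ ≤ ‖φⁿ(x)‖²`, so the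
  norm `k` of the inverse of `φⁿ` on `C` satisfies `k² ≤ 2 k`, that is `k ≤ 2`, whatever `n` is.
-/

/-- The tail operator system `M_∞` of `φ`. -/
def tailSystem {M : Type*} [NormedRing M] [NormedAlgebra ℂ M] (φ : M →ₗ[ℂ] M) : Set M :=
  {y | ∃ C > (0 : ℝ), ∀ n : ℕ, 1 ≤ n → ∃ x : M, ‖x‖ ≤ C ∧ (φ ^ n) x = y}

/-- The Jordan product `x ∘ y = (x·y + y·x)/2`. -/
noncomputable def jordan {M : Type*} [Ring M] [Algebra ℂ M] (x y : M) : M :=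
  (2⁻¹ : ℂ) • (x * y + y * x)

/-- The definite set `M_φ = {x : φ(x* ∘ x) = φ(x)* ∘ φ(x)}` of `φ`. -/
noncomputable def definiteSet {M : Type*} [Ring M] [StarRing M] [Algebra ℂ M]
    (φ : M →ₗ[ℂ] M) : Set M :=
  {x | φ (jordan (star x) x) = jordan (star (φ x)) (φ x)}

/-- `B_φ = {x : φ^n(x) ∈ M_φ for all n ≥ 0}`. -/
noncomputable def Bset {M : Type*} [Ring M] [StarRing M] [Algebra ℂ M]
    (φ : M →ₗ[ℂ] M) : Set M :=
  {x | ∀ n : ℕ, (φ ^ n) x ∈ definiteSet φ}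

/-- The multiplicative core `C_φ = ⋂_{n ≥ 1} φ^n(B_φ)`. -/
noncomputable def multCore {M : Type*} [Ring M] [StarRing M] [Algebra ℂ M]
    (φ : M →ₗ[ℂ] M) : Set M :=
  ⋂ (n : ℕ) (_ : 1 ≤ n), (φ ^ n) '' (Bset φ)

section TailSystem

open Filter Topology

variable {M : Type*} [CStarAlgebra M]

/-! ### Preliminaries -/

lemma finite_spectrum_real [FiniteDimensional ℂ M] (a : M) : (spectrum ℝ a).Finite := by
  have : Module.Finite ℝ M := Module.Finite.trans ℂ M
  have hint : IsIntegral ℝ a := IsIntegral.of_finite ℝ a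
  obtain ⟨p, hp, h0⟩ := hint
  refine (p.roots.toFinset.finite_toSet).subset fun x hx => ?_
  have h1 : p.eval x ∈ spectrum ℝ (Polynomial.aeval a p) :=
    spectrum.subset_polynomial_aeval a p ⟨x, hx, rfl⟩
  rw [show Polynomial.aeval a p = 0 from h0] at h1
  have h2 : p.eval x = 0 := by
    by_contra hne
    refine h1 ?_
    rw [spectrum.mem_resolventSet_iff, sub_zero]
    exact (IsUnit.mk0 _ hne).map (algebraMap ℝ M)
  simp [hp.ne_zero, h2]

/-- Expresses `x* ∘ x` through the real and imaginary parts of `x`. -/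
lemma star_mul_add_mul_star (x : M) :
    star x * x + x * star x =
      (2 : ℂ) • ((realPart x : M) * realPart x + (imaginaryPart x : M) * imaginaryPart x) := by
  have hx := realPart_add_I_smul_imaginaryPart x
  have ha : star (realPart x : M) = realPart x := (realPart x).2
  have hb : star (imaginaryPart x : M) = imaginaryPart x := (imaginaryPart x).2
  generalize (realPart x : M) = a at *
  generalize (imaginaryPart x : M) = b at *
  subst hx
  simp only [star_add, star_smul, ha, hb, RCLike.star_def, Complex.conj_I, add_mul, mul_add,
    smul_mul_assoc, mul_smul_comm, mul_neg, neg_mul, neg_smul, smul_neg, smul_add, smul_smul,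
    Complex.I_mul_I, neg_neg, one_smul]
  module

lemma pow_map_jordan {φ : M →ₗ[ℂ] M} {x : M} (hx : x ∈ Bset φ) (n : ℕ) :
    (φ ^ n) (jordan (star x) x) = jordan (star ((φ ^ n) x)) ((φ ^ n) x) := by
  induction n with
  | zero => simp
  | succ n ih =>
    rw [pow_succ', Module.End.mul_apply, Module.End.mul_apply, ih]
    exact hx n

lemma pow_mem_Bset {φ : M →ₗ[ℂ] M} {x : M} (hx : x ∈ Bset φ) (n : ℕ) : (φ ^ n) x ∈ Bset φ := fun m => by
  rw [← Module.End.mul_apply, ← pow_add]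
  exact hx (m + n)

lemma norm_jordan_le (x : M) : ‖jordan (star x) x‖ ≤ ‖x‖ ^ 2 := by
  have h1 : ‖star x * x + x * star x‖ ≤ ‖star x * x‖ + ‖x * star x‖ := norm_add_le _ _
  rw [CStarRing.norm_star_mul_self, CStarRing.norm_self_mul_star] at h1
  rw [jordan, norm_smul]
  norm_num
  nlinarith

variable [PartialOrder M] [StarOrderedRing M]

/-- A self-adjoint element is a real combination of positive elements summing
to `1`, with its square given by the squared coefficients (the `p i` are its spectral
projections). -/
lemma exists_spectral [FiniteDimensional ℂ M] {a : M} (ha : IsSelfAdjoint a) :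
    ∃ (s : Finset ℝ) (p : ℝ → M), (∀ i, 0 ≤ p i) ∧ ∑ i ∈ s, p i = 1 ∧
      ∑ i ∈ s, i • p i = a ∧ ∑ i ∈ s, (i * i) • p i = a * a := by
  classical
  have hfin := finite_spectrum_real a
  have hc : ∀ f : ℝ → ℝ, ContinuousOn f (spectrum ℝ a) := fun f => hfin.continuousOn f
  let e : ℝ → ℝ → ℝ := fun i x => if x = i then 1 else 0
  have key : ∀ f : ℝ → ℝ, ∑ i ∈ hfin.toFinset, f i • cfc (e i) a = cfc f a := by
    intro f
    have h1 : ∀ i, f i • cfc (e i) a = cfc (fun x => f i * e i x) a := fun i =>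
      (cfc_const_mul (f i) (e i) a (hc _)).symm
    simp_rw [h1]
    rw [← cfc_sum (fun i x => f i * e i x) a hfin.toFinset (fun i _ => hc _)]
    refine cfc_congr fun x hx => ?_
    simp only [Finset.sum_apply, e]
    simp only [mul_ite, mul_one, mul_zero]
    rw [Finset.sum_ite_eq]
    simp [hx]
  refine ⟨hfin.toFinset, fun i => cfc (e i) a, fun i => cfc_nonneg fun x _ => ?_, ?_, ?_, ?_⟩
  · simp only [e]; split_ifs <;> norm_num
  · have := key (fun _ => 1)
    rw [cfc_const_one ℝ a] at this
    simpa using this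
  · rw [key (fun i => i), cfc_id' ℝ a]
  · rw [key (fun i => i * i), cfc_mul (fun x => x) (fun x => x) a (hc _) (hc _), cfc_id' ℝ a]

lemma eq_zero_of_forall_smul_add_nonneg {X Y : M} (h : ∀ t : ℝ, 0 ≤ t • X + Y) : X = 0 := by
  have aux : ∀ X : M, (∀ t : ℝ, 0 ≤ t • X + Y) → 0 ≤ X := by
    intro X h
    have hlim : Tendsto (fun n : ℕ => X + (1 / ((n : ℝ) + 1)) • Y) atTop (𝓝 (X + (0 : ℝ) • Y)) :=
      tendsto_const_nhds.add (tendsto_one_div_add_atTop_nhds_zero_nat.smul_const Y)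
    rw [zero_smul, add_zero] at hlim
    refine ge_of_tendsto' hlim fun n => ?_
    have hn : (0 : ℝ) < (n : ℝ) + 1 := by positivity
    have := smul_nonneg (one_div_pos.2 hn).le (h (n + 1))
    rwa [smul_add, smul_smul, one_div_mul_cancel hn.ne', one_smul] at this
  refine le_antisymm ?_ (aux X h)
  have := aux (-X) fun t => by simpa using h (-t)
  simpa using this

section Positive

variable {φ : M →ₗ[ℂ] M}

/-! ### Kadison's inequality -/

lemma map_star_of_pos (hpos : ∀ x : M, 0 ≤ x → 0 ≤ φ x) (x : M) : φ (star x) = star (φ x) := by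
  obtain ⟨y, hy, -, rfl⟩ := CStarAlgebra.exists_sum_four_nonneg x
  have h1 : ∀ i, star (y i) = y i := fun i => (IsSelfAdjoint.of_nonneg (hy i)).star_eq
  have h2 : ∀ i, star (φ (y i)) = φ (y i) := fun i =>
    (IsSelfAdjoint.of_nonneg (hpos _ (hy i))).star_eq
  simp only [star_sum, map_sum, map_smul, star_smul, h1, h2]

lemma isSelfAdjoint_map_of_pos (hpos : ∀ x : M, 0 ≤ x → 0 ≤ φ x) {a : M} (ha : IsSelfAdjoint a) :
    IsSelfAdjoint (φ a) := by
  rw [IsSelfAdjoint, ← map_star_of_pos hpos, ha.star_eq]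

/-- Kadison's inequality. -/
lemma kadison [FiniteDimensional ℂ M] (hunit : φ 1 = 1) (hpos : ∀ x : M, 0 ≤ x → 0 ≤ φ x)
    {a : M} (ha : IsSelfAdjoint a) : φ a * φ a ≤ φ (a * a) := by
  obtain ⟨s, p, hp, h1, h2, h3⟩ := exists_spectral ha
  have hT := isSelfAdjoint_map_of_pos hpos ha
  have e1 : ∑ i ∈ s, φ (p i) = 1 := by rw [← map_sum, h1, hunit]
  have e2 : ∑ i ∈ s, i • φ (p i) = φ a := by
    rw [← h2, map_sum]; simp only [φ.map_smul_of_tower]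
  have e3 : ∑ i ∈ s, (i * i) • φ (p i) = φ (a * a) := by
    rw [← h3, map_sum]; simp only [φ.map_smul_of_tower]
  have hnn : 0 ≤ ∑ i ∈ s, (i • (1 : M) - φ a) * φ (p i) * (i • (1 : M) - φ a) := by
    refine Finset.sum_nonneg fun i _ => ?_
    refine IsSelfAdjoint.conjugate_nonneg (hpos _ (hp i)) ?_
    exact ((IsSelfAdjoint.all i).smul (IsSelfAdjoint.one M)).sub hT
  have hexp : ∑ i ∈ s, (i • (1 : M) - φ a) * φ (p i) * (i • (1 : M) - φ a) =
      φ (a * a) - φ a * φ a := by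
    have : ∀ i, (i • (1 : M) - φ a) * φ (p i) * (i • (1 : M) - φ a) =
        (i * i) • φ (p i) - (i • φ (p i)) * φ a - φ a * (i • φ (p i)) + φ a * φ (p i) * φ a := by
      intro i
      simp only [sub_mul, mul_sub, smul_mul_assoc, mul_smul_comm, one_mul, mul_one, smul_sub, smul_smul]
      abel
    simp only [this, Finset.sum_add_distrib, Finset.sum_sub_distrib, ← Finset.sum_mul,
      ← Finset.mul_sum, e1, e2, e3]
    simp
  rw [hexp] at hnn
  exact sub_nonneg.1 hnn

/-! ### The definite set -/

/-- Equality in Kadison's inequality at `a` forces `φ` to respect Jordan products with `a`: the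
inequality at `t a + b` is affine in `t`, so its linear coefficient vanishes. -/
lemma map_anticomm_of_selfAdjoint [FiniteDimensional ℂ M] (hunit : φ 1 = 1)
    (hpos : ∀ x : M, 0 ≤ x → 0 ≤ φ x) {a : M} (ha : IsSelfAdjoint a)
    (h : φ (a * a) = φ a * φ a) (x : M) : φ (a * x + x * a) = φ a * φ x + φ x * φ a := by
  have key : ∀ b : M, IsSelfAdjoint b → φ (a * b + b * a) = φ a * φ b + φ b * φ a := by
    intro b hb
    rw [← sub_eq_zero]
    refine eq_zero_of_forall_smul_add_nonneg (Y := φ (b * b) - φ b * φ b) fun t => ?_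
    have hsa : IsSelfAdjoint (t • a + b) := ((IsSelfAdjoint.all t).smul ha).add hb
    have hk := sub_nonneg.2 (kadison hunit hpos hsa)
    refine hk.trans_eq ?_
    simp only [add_mul, mul_add, smul_mul_assoc, mul_smul_comm, map_add, φ.map_smul_of_tower, h,
      smul_add, smul_sub]
    abel
  have hx := realPart_add_I_smul_imaginaryPart x
  have h1 := key _ (realPart x).2
  have h2 := key _ (imaginaryPart x).2
  generalize (realPart x : M) = c at *
  generalize (imaginaryPart x : M) = d at *
  subst hx
  have : a * (c + Complex.I • d) + (c + Complex.I • d) * a =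
      (a * c + c * a) + Complex.I • (a * d + d * a) := by
    simp only [add_mul, mul_add, smul_mul_assoc, mul_smul_comm, smul_add]; abel
  rw [this, map_add, map_smul, h1, h2]
  simp only [add_mul, mul_add, smul_mul_assoc, mul_smul_comm, smul_add, map_add, map_smul]
  abel

lemma map_mul_self_of_mem [FiniteDimensional ℂ M] (hunit : φ 1 = 1)
    (hpos : ∀ x : M, 0 ≤ x → 0 ≤ φ x) {x : M} (hx : x ∈ definiteSet φ) :
    φ ((realPart x : M) * realPart x) = φ (realPart x) * φ (realPart x) ∧
    φ ((imaginaryPart x : M) * imaginaryPart x) = φ (imaginaryPart x) * φ (imaginaryPart x) := by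
  have ka := kadison hunit hpos (realPart x).2
  have kb := kadison hunit hpos (imaginaryPart x).2
  have hre : (realPart (φ x) : M) = φ (realPart x) := by
    rw [realPart_apply_coe, realPart_apply_coe, φ.map_smul_of_tower, map_add, map_star_of_pos hpos]
  have him : (imaginaryPart (φ x) : M) = φ (imaginaryPart x) := by
    rw [imaginaryPart_apply_coe, imaginaryPart_apply_coe, map_smul, φ.map_smul_of_tower, map_sub,
      map_star_of_pos hpos]
  have h : φ (jordan (star x) x) = jordan (star (φ x)) (φ x) := hx
  rw [jordan, jordan, star_mul_add_mul_star, star_mul_add_mul_star, hre, him, smul_smul,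
    smul_smul, inv_mul_cancel₀ two_ne_zero, one_smul, one_smul, map_add] at h
  -- two nonnegative defects with sum zero both vanish
  have hz : (φ ((realPart x : M) * realPart x) - φ (realPart x) * φ (realPart x)) +
      (φ ((imaginaryPart x : M) * imaginaryPart x) - φ (imaginaryPart x) * φ (imaginaryPart x))
      = 0 := by
    rw [sub_add_sub_comm, h, sub_self]
  rw [add_eq_zero_iff_of_nonneg (sub_nonneg.2 ka) (sub_nonneg.2 kb), sub_eq_zero, sub_eq_zero] at hz
  exact hz

lemma mem_definiteSet_iff [FiniteDimensional ℂ M] (hunit : φ 1 = 1)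
    (hpos : ∀ x : M, 0 ≤ x → 0 ≤ φ x) {x : M} :
    x ∈ definiteSet φ ↔ ∀ y, φ (x * y + y * x) = φ x * φ y + φ y * φ x := by
  constructor
  · intro h y
    obtain ⟨h1, h2⟩ := map_mul_self_of_mem hunit hpos h
    have e1 := map_anticomm_of_selfAdjoint hunit hpos (realPart x).2 h1 y
    have e2 := map_anticomm_of_selfAdjoint hunit hpos (imaginaryPart x).2 h2 y
    have hx := realPart_add_I_smul_imaginaryPart x
    generalize (realPart x : M) = c at *
    generalize (imaginaryPart x : M) = d at *
    subst hx
    have : (c + Complex.I • d) * y + y * (c + Complex.I • d) =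
        (c * y + y * c) + Complex.I • (d * y + y * d) := by
      simp only [add_mul, mul_add, smul_mul_assoc, mul_smul_comm, smul_add]; abel
    rw [this, map_add, map_smul, e1, e2]
    simp only [add_mul, mul_add, smul_mul_assoc, mul_smul_comm, smul_add, map_add, map_smul]
    abel
  · intro h
    change φ (jordan (star x) x) = jordan (star (φ x)) (φ x)
    rw [jordan, jordan, map_smul, add_comm, h, map_star_of_pos hpos, add_comm]

/-- The square of a self-adjoint element of `M_φ` lies in `M_φ`. -/
lemma mul_self_mem_definiteSet [FiniteDimensional ℂ M] (hunit : φ 1 = 1)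
    (hpos : ∀ x : M, 0 ≤ x → 0 ≤ φ x) {a : M} (ha : IsSelfAdjoint a)
    (h : φ (a * a) = φ a * φ a) : a * a ∈ definiteSet φ := by
  have hm := map_anticomm_of_selfAdjoint hunit hpos ha h
  have h3 : φ (a * (a * a)) = φ a * (φ a * φ a) := by
    have := hm (a * a)
    rw [h, mul_assoc, mul_assoc, ← two_smul ℂ, ← two_smul ℂ, map_smul] at this
    exact smul_right_injective M (two_ne_zero (α := ℂ)) this
  have h4 : φ (a * a * (a * a)) = φ (a * a) * φ (a * a) := by
    have := hm (a * (a * a))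
    rw [h3, ← mul_assoc a a (a * a), mul_assoc a (a * a) a, mul_assoc a a a, ← mul_assoc a a (a * a),
      ← two_smul ℂ, map_smul, mul_assoc (φ a) (φ a * φ a) (φ a), mul_assoc (φ a) (φ a) (φ a),
      ← two_smul ℂ, ← mul_assoc (φ a) (φ a) (φ a * φ a), ← h] at this
    exact smul_right_injective M (two_ne_zero (α := ℂ)) this
  have haa : IsSelfAdjoint (a * a) := by
    rw [IsSelfAdjoint, star_mul, ha.star_eq]
  exact (mem_definiteSet_iff hunit hpos).2 (map_anticomm_of_selfAdjoint hunit hpos haa h4)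

/-- `M_φ` as a linear subspace. -/
noncomputable def definiteSubmodule [FiniteDimensional ℂ M] (hunit : φ 1 = 1)
    (hpos : ∀ x : M, 0 ≤ x → 0 ≤ φ x) : Submodule ℂ M where
  carrier := definiteSet φ
  zero_mem' := by
    rw [mem_definiteSet_iff hunit hpos]; simp
  add_mem' := by
    intro x y hx hy
    rw [mem_definiteSet_iff hunit hpos] at *
    intro z
    have : (x + y) * z + z * (x + y) = (x * z + z * x) + (y * z + z * y) := by
      simp only [add_mul, mul_add]; abel
    rw [this, map_add, hx, hy, map_add]
    simp only [add_mul, mul_add]; abel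
  smul_mem' := by
    intro c x hx
    rw [mem_definiteSet_iff hunit hpos] at *
    intro z
    rw [smul_mul_assoc, mul_smul_comm, ← smul_add, map_smul, hx, map_smul, smul_mul_assoc,
      mul_smul_comm, smul_add]

lemma jordan_star_self_mem_definiteSet [FiniteDimensional ℂ M] (hunit : φ 1 = 1)
    (hpos : ∀ x : M, 0 ≤ x → 0 ≤ φ x) {x : M} (hx : x ∈ definiteSet φ) :
    jordan (star x) x ∈ definiteSet φ := by
  obtain ⟨h1, h2⟩ := map_mul_self_of_mem hunit hpos hx
  rw [jordan, star_mul_add_mul_star, smul_smul, inv_mul_cancel₀ two_ne_zero, one_smul]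
  exact (definiteSubmodule hunit hpos).add_mem
    (mul_self_mem_definiteSet hunit hpos (realPart x).2 h1)
    (mul_self_mem_definiteSet hunit hpos (imaginaryPart x).2 h2)

/-! ### The set `B_φ` -/

/-- `B_φ` as a linear subspace. -/
noncomputable def bSubmodule [FiniteDimensional ℂ M] (hunit : φ 1 = 1)
    (hpos : ∀ x : M, 0 ≤ x → 0 ≤ φ x) : Submodule ℂ M where
  carrier := Bset φ
  zero_mem' := fun n => by
    rw [map_zero]; exact (definiteSubmodule hunit hpos).zero_mem
  add_mem' := fun hx hy n => by
    rw [map_add]; exact (definiteSubmodule hunit hpos).add_mem (hx n) (hy n)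
  smul_mem' := fun c x hx n => by
    rw [map_smul]; exact (definiteSubmodule hunit hpos).smul_mem c (hx n)

lemma jordan_star_self_mem_Bset [FiniteDimensional ℂ M] (hunit : φ 1 = 1)
    (hpos : ∀ x : M, 0 ≤ x → 0 ≤ φ x) {x : M} (hx : x ∈ Bset φ) :
    jordan (star x) x ∈ Bset φ := fun n => by
  rw [pow_map_jordan hx]
  exact jordan_star_self_mem_definiteSet hunit hpos (hx n)

/-! ### Norm bounds -/

lemma norm_sq_le_jordan (x : M) : ‖x‖ ^ 2 ≤ 2 * ‖jordan (star x) x‖ := by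
  have h1 : ‖star x * x‖ ≤ ‖star x * x + x * star x‖ :=
    CStarAlgebra.norm_le_norm_of_nonneg_of_le (star_mul_self_nonneg x)
      (le_add_of_nonneg_right (mul_star_self_nonneg x))
  rw [jordan, norm_smul]
  rw [CStarRing.norm_star_mul_self] at h1
  norm_num
  nlinarith

/-- If a linear bijection `f` of a subspace `C` stable under `x ↦ x* ∘ x`
commutes with that operation, then `‖x‖ ≤ 2 ‖f x‖`. -/
lemma norm_le_two_mul [FiniteDimensional ℂ M] (C : Submodule ℂ M)
    (hC : ∀ x ∈ C, jordan (star x) x ∈ C) (f : C ≃ₗ[ℂ] C)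
    (hf : ∀ x : C, (f ⟨_, hC x x.2⟩ : M) = jordan (star (f x : M)) (f x)) (x : C) :
    ‖x‖ ≤ 2 * ‖f x‖ := by
  let g : C →L[ℂ] C := LinearMap.toContinuousLinearMap (f.symm : C →ₗ[ℂ] C)
  have hg : ∀ y, g (f y) = y := fun y => f.symm_apply_apply y
  have hstep : ∀ y, ‖g y‖ ≤ Real.sqrt (2 * ‖g‖) * ‖y‖ := by
    intro y
    obtain ⟨z, rfl⟩ := f.surjective y
    rw [hg]
    have h1 := norm_sq_le_jordan (z : M)
    have h2 : ‖jordan (star (z : M)) z‖ ≤ ‖g‖ * ‖f ⟨_, hC z z.2⟩‖ := by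
      have := g.le_opNorm (f ⟨_, hC z z.2⟩)
      rwa [hg] at this
    have h3 : ‖f ⟨_, hC z z.2⟩‖ ≤ ‖f z‖ ^ 2 := by
      have := norm_jordan_le (f z : M)
      rwa [← hf z] at this
    have h4 := mul_le_mul_of_nonneg_left h3 (norm_nonneg g)
    refine le_of_sq_le_sq ?_ (by positivity)
    rw [mul_pow, Real.sq_sqrt (by positivity)]
    have : ‖z‖ = ‖(z : M)‖ := rfl
    rw [this]
    linarith
  have hop := g.opNorm_le_bound (Real.sqrt_nonneg _) hstep
  have hg2 : ‖g‖ ≤ 2 := by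
    have h0 := norm_nonneg g
    have := Real.sq_sqrt (show 0 ≤ 2 * ‖g‖ by positivity)
    by_contra! hlt
    nlinarith
  have := g.le_opNorm (f x)
  rw [hg] at this
  exact this.trans (mul_le_mul_of_nonneg_right hg2 (norm_nonneg _))

end Positive

end TailSystem

/-- for a UP map on a finite-dimensional C*-algebra, the multiplicative core is
contained in the tail operator system. -/
theorem multCore_subset_tailSystem
    {M : Type*} [CStarAlgebra M] [PartialOrder M] [StarOrderedRing M]
    [FiniteDimensional ℂ M]
    (φ : M →ₗ[ℂ] M) (hunit : φ 1 = 1)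
    (hpos : ∀ x : M, 0 ≤ x → 0 ≤ φ x) :
    multCore φ ⊆ tailSystem φ := by
  let B := bSubmodule hunit hpos
  have hanti : ∀ m k : ℕ, B.map (φ ^ (m + k)) ≤ B.map (φ ^ m) := by
    rintro m k _ ⟨x, hx, rfl⟩
    exact ⟨(φ ^ k) x, pow_mem_Bset hx k, by rw [pow_add, Module.End.mul_apply]⟩
  obtain ⟨N, hN⟩ := IsArtinian.monotone_stabilizes (R := ℂ) (M := M)
    { toFun := fun n => OrderDual.toDual (B.map (φ ^ n))
      monotone' := fun m n hmn => by
        obtain ⟨k, rfl⟩ := Nat.exists_eq_add_of_le hmn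
        exact hanti m k }
  set C : Submodule ℂ M := B.map (φ ^ N) with hCdef
  have hstab : ∀ n, B.map (φ ^ (n + N)) = C := fun n => (hN (n + N) (Nat.le_add_left _ _)).symm
  have hmap : ∀ n, C.map (φ ^ n) = C := fun n => by
    conv_rhs => rw [← hstab n, pow_add]
    exact (Submodule.map_comp _ _ B).symm
  have hCB : ∀ x ∈ C, x ∈ Bset φ := by
    rintro _ ⟨z, hz, rfl⟩
    exact pow_mem_Bset hz N
  have hCj : ∀ x ∈ C, jordan (star x) x ∈ C := by
    rintro _ ⟨z, hz, rfl⟩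
    exact ⟨_, jordan_star_self_mem_Bset hunit hpos hz, pow_map_jordan hz N⟩
  intro y hy
  have hyC : y ∈ C := by
    -- `N` itself may be `0`, while `C_φ` only involves exponents `≥ 1`
    rw [← hstab 1]
    simp only [multCore, Set.mem_iInter] at hy
    exact hy (1 + N) (Nat.le_add_right _ _)
  refine ⟨2 * ‖y‖ + 1, by positivity, fun n _ => ?_⟩
  have hmem : ∀ x ∈ C, (φ ^ n) x ∈ C := fun x hx => hmap n ▸ Submodule.mem_map_of_mem hx
  have hsurj : Function.Surjective ((φ ^ n).restrict hmem) := by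
    rintro ⟨z, hz⟩
    have hz' := hz
    rw [← hmap n] at hz'
    obtain ⟨x, hx, rfl⟩ := hz'
    exact ⟨⟨x, hx⟩, rfl⟩
  let f : C ≃ₗ[ℂ] C := LinearEquiv.ofBijective ((φ ^ n).restrict hmem)
    ⟨LinearMap.injective_iff_surjective.2 hsurj, hsurj⟩
  obtain ⟨x, hx⟩ := f.surjective ⟨y, hyC⟩
  have hb := norm_le_two_mul C hCj f (fun z => pow_map_jordan (hCB z z.2) n) x
  rw [hx] at hb
  refine ⟨x, ?_, congrArg Subtype.val hx⟩
  have : ‖(x : M)‖ ≤ 2 * ‖y‖ := hb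
  linarith
end

section
/- Let M be a unital C*-algebra that is finite-dimensional as a complex vector space and let φ : M → M be a faithful UP map (0 ≤ x and φ(x) = 0 imply x = 0). Then the multiplicative core C_φ equals the ℂ-linear span of the set of projections contained in the tail operator system M_∞, i.e. C_φ = span_ℂ {e ∈ M_∞ : e* = e and e² = e}. -/
set_option linter.unusedSectionVars false

/-! ### Spectral projections -/

open Polynomial in
/-- Spectral decomposition `a = ∑ r p_r` with spectral projections `p_r` that are real polynomials
in `a`: the Lagrange basis polynomials of the finite spectrum. -/
theorem exists_spectral_polynomials {M : Type*} [CStarAlgebra M] [PartialOrder M]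
    [StarOrderedRing M] [FiniteDimensional ℂ M] (a : M) (ha : IsSelfAdjoint a) :
    ∃ (S : Finset ℝ) (q : ℝ → ℝ[X]),
      (∀ r ∈ S, 0 ≤ aeval a (q r) ∧ aeval a (q r) * aeval a (q r) = aeval a (q r)) ∧
      ∑ r ∈ S, aeval a (q r) = 1 ∧ ∑ r ∈ S, r • aeval a (q r) = a ∧
      ∑ r ∈ S, (r ^ 2) • aeval a (q r) = a * a := by
  classical
  have hfin : (spectrum ℝ a).Finite := by
    have : FiniteDimensional ℝ M := FiniteDimensional.complexToReal M
    have hintegral : IsIntegral ℝ a := Algebra.IsIntegral.isIntegral a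
    refine ((minpoly ℝ a).roots.toFinset.finite_toSet).subset fun z hz => ?_
    have h0 := spectrum.subset_polynomial_aeval a (minpoly ℝ a) ⟨z, hz, rfl⟩
    rw [minpoly.aeval] at h0
    have h1 : (minpoly ℝ a).eval z = 0 := by
      by_contra hne
      exact (spectrum.mem_iff.1 h0) (by
        rw [sub_zero]; exact (IsUnit.mk0 _ hne).map (algebraMap ℝ M))
    simpa [minpoly.ne_zero hintegral] using h1
  set S := hfin.toFinset with hS
  have hmem : ∀ x, x ∈ S ↔ x ∈ spectrum ℝ a := fun x => hfin.mem_toFinset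
  set q : ℝ → ℝ[X] := fun r => Lagrange.basis S id r with hq
  have hval : ∀ r ∈ S, ∀ x ∈ S, (q r).eval x = if x = r then 1 else 0 := by
    intro r hr x hx
    split_ifs with h
    · subst h
      simpa using Lagrange.eval_basis_self (v := (id : ℝ → ℝ)) (Set.injOn_id _) hr
    · simpa using Lagrange.eval_basis_of_ne (v := (id : ℝ → ℝ)) (Ne.symm h) hx
  -- Polynomials that agree on the spectrum agree at `a`.
  have hcongr : ∀ p₁ p₂ : ℝ[X], (∀ x ∈ S, p₁.eval x = p₂.eval x) →
      aeval a p₁ = aeval a p₂ := by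
    intro p₁ p₂ h
    rw [← cfc_polynomial p₁ a ha, ← cfc_polynomial p₂ a ha]
    exact cfc_congr fun x hx => h x ((hmem x).2 hx)
  refine ⟨S, q, fun r hr => ⟨?_, ?_⟩, ?_, ?_, ?_⟩
  · rw [← cfc_polynomial _ a ha]
    refine cfc_nonneg fun x hx => ?_
    rw [hval r hr x ((hmem x).2 hx)]
    split_ifs <;> simp
  · rw [← map_mul]
    refine hcongr _ _ fun x hx => ?_
    rw [eval_mul, hval r hr x hx]
    split_ifs <;> simp
  · rw [← map_sum, ← map_one (aeval (R := ℝ) a)]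
    refine hcongr _ _ fun x hx => ?_
    rw [eval_finsetSum, Finset.sum_congr rfl fun r hr => hval r hr x hx]
    simp [hx]
  · have : aeval a (∑ r ∈ S, r • q r) = aeval a (X : ℝ[X]) := by
      refine hcongr _ _ fun x hx => ?_
      simp only [eval_finsetSum, eval_smul]
      rw [Finset.sum_congr rfl fun r hr => by rw [hval r hr x hx]]
      simp [hx]
    simpa using this
  · have : aeval a (∑ r ∈ S, (r ^ 2) • q r) = aeval a (X * X : ℝ[X]) := by
      refine hcongr _ _ fun x hx => ?_
      simp only [eval_finsetSum, eval_smul]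
      rw [Finset.sum_congr rfl fun r hr => by rw [hval r hr x hx]]
      simp [hx, pow_two]
    simpa using this

/-! ### Unital positive maps and Kadison's inequality -/

/-- A unital positive linear map. -/
structure IsUP {M : Type*} [Ring M] [Algebra ℂ M] [PartialOrder M] (φ : M →ₗ[ℂ] M) : Prop where
  map_one : φ 1 = 1
  map_nonneg : ∀ x : M, 0 ≤ x → 0 ≤ φ x

/-- The Jordan–Schwarz defect `φ(x* ∘ x) - φ(x)* ∘ φ(x)`. -/
noncomputable def defect {M : Type*} [Ring M] [StarRing M] [Algebra ℂ M]
    (φ : M →ₗ[ℂ] M) (x : M) : M :=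
  φ (jordan (star x) x) - jordan (star (φ x)) (φ x)

theorem mem_definiteSet_iff_s11 {M : Type*} [Ring M] [StarRing M] [Algebra ℂ M]
    (φ : M →ₗ[ℂ] M) (x : M) : x ∈ definiteSet φ ↔ defect φ x = 0 :=
  sub_eq_zero.symm

theorem jordan_self {M : Type*} [Ring M] [Algebra ℂ M] (a : M) : jordan a a = a * a := by
  rw [jordan, ← two_smul ℂ (a * a), smul_smul]
  norm_num

theorem jordan_comm {M : Type*} [Ring M] [Algebra ℂ M] (a b : M) : jordan a b = jordan b a := by
  rw [jordan, jordan, add_comm]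

theorem IsUP.pow {M : Type*} [Ring M] [Algebra ℂ M] [PartialOrder M]
    {φ : M →ₗ[ℂ] M} (hφ : IsUP φ) (n : ℕ) : IsUP (φ ^ n) := by
  induction n with
  | zero => exact ⟨rfl, fun x hx => hx⟩
  | succ n ih =>
    rw [pow_succ']
    exact ⟨by simp [ih.map_one, hφ.map_one],
      fun x hx => hφ.map_nonneg _ (ih.map_nonneg x hx)⟩

section UP

variable {M : Type*} [CStarAlgebra M] [PartialOrder M] [StarOrderedRing M]

theorem jordan_star_self_nonneg (x : M) : 0 ≤ jordan (star x) x := by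
  have h : jordan (star x) x = (2⁻¹ : ℝ) • (star x * x + x * star x) := by
    rw [jordan, ← Complex.coe_smul]; norm_num
  rw [h]
  exact smul_nonneg (by norm_num) (add_nonneg (star_mul_self_nonneg x) (mul_star_self_nonneg x))

theorem eq_zero_of_jordan_star_self (x : M) (h : jordan (star x) x = 0) : x = 0 := by
  have h1 : star x * x + x * star x = 0 := by
    rw [jordan] at h
    exact (smul_eq_zero.1 h).resolve_left (by norm_num)
  have h2 : star x * x = 0 :=
    le_antisymm (by
      calc star x * x ≤ star x * x + x * star x :=
            le_add_of_nonneg_right (mul_star_self_nonneg x)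
        _ = 0 := h1) (star_mul_self_nonneg x)
  exact CStarRing.star_mul_self_eq_zero_iff x |>.1 h2

theorem sq_le_self_of_mem_Icc {x : M} (h0 : 0 ≤ x) (h1 : x ≤ 1) : x * x ≤ x := by
  simpa [pow_two] using CStarAlgebra.pow_antitone h0 h1 one_le_two

theorem mem_Icc_of_projection {e : M} (hs : star e = e) (he : e * e = e) :
    0 ≤ e ∧ e ≤ 1 := by
  have h0 : ∀ f : M, star f = f → f * f = f → 0 ≤ f := fun f hs hf => by
    have := star_mul_self_nonneg f
    rwa [hs, hf] at this
  refine ⟨h0 e hs he, sub_nonneg.1 (h0 _ (by simp [hs]) ?_)⟩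
  simp [mul_sub, sub_mul, he]

/-- The first-order perturbation step of the Cauchy–Schwarz argument: dividing by `t` and letting
`t → ±∞` puts both `b` and `-b` in the closed positive cone. -/
theorem eq_zero_of_forall_add_smul_nonneg {a b : M} (h : ∀ t : ℝ, 0 ≤ a + t • b) : b = 0 := by
  have key : ∀ c : M, (∀ n : ℕ, 0 ≤ a + (n : ℝ) • c) → 0 ≤ c := by
    intro c hc
    have hlim : Filter.Tendsto (fun n : ℕ => ((n : ℝ) + 1)⁻¹ • a + c) Filter.atTop
        (nhds ((0 : ℝ) • a + c)) := by
      refine Filter.Tendsto.add_const _ (Filter.Tendsto.smul_const ?_ _)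
      simpa using tendsto_one_div_add_atTop_nhds_zero_nat (𝕜 := ℝ)
    rw [zero_smul, zero_add] at hlim
    refine ge_of_tendsto' hlim fun n => ?_
    have hn : (0 : ℝ) < (n : ℝ) + 1 := by positivity
    have h1 := smul_nonneg (inv_nonneg.2 hn.le) (hc (n + 1))
    rw [smul_add, smul_smul] at h1
    push_cast at h1
    rwa [inv_mul_cancel₀ hn.ne', one_smul] at h1
  refine le_antisymm ?_ (key b fun n => h n)
  refine neg_nonneg.1 (key (-b) fun n => ?_)
  simpa using h (-n)

namespace IsUP

variable {φ : M →ₗ[ℂ] M}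

theorem mono (hφ : IsUP φ) {x y : M} (h : x ≤ y) : φ x ≤ φ y := by
  have := hφ.map_nonneg _ (sub_nonneg.2 h)
  rwa [map_sub, sub_nonneg] at this

theorem map_star (hφ : IsUP φ) (x : M) : φ (star x) = star (φ x) :=
  StarHomClass.map_star (PositiveLinearMap.mk₀ φ hφ.map_nonneg) x

theorem map_Icc (hφ : IsUP φ) {x : M} (h0 : 0 ≤ x) (h1 : x ≤ 1) : 0 ≤ φ x ∧ φ x ≤ 1 :=
  ⟨hφ.map_nonneg x h0, hφ.map_one ▸ hφ.mono h1⟩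

/-- A bound uniform over all unital positive maps, hence over all powers of one such map. -/
theorem norm_le (hφ : IsUP φ) (x : M) : ‖φ x‖ ≤ 4 * ‖(1 : M)‖ * ‖x‖ := by
  obtain ⟨y, hy0, hyn, hy⟩ := CStarAlgebra.exists_sum_four_nonneg x
  have hb : ∀ i, ‖φ (y i)‖ ≤ ‖(1 : M)‖ * ‖x‖ := fun i => by
    have h := (PositiveLinearMap.mk₀ φ hφ.map_nonneg).norm_apply_le_of_nonneg (y i) (hy0 i)
    change ‖φ (y i)‖ ≤ ‖φ 1‖ * ‖y i‖ at h
    rw [hφ.map_one] at h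
    exact h.trans (by gcongr; exact hyn i)
  calc ‖φ x‖ = ‖∑ i : Fin 4, Complex.I ^ (i : ℕ) • φ (y i)‖ := by
        conv_lhs => rw [hy]
        simp only [map_sum, map_smul]
    _ ≤ ∑ i : Fin 4, ‖Complex.I ^ (i : ℕ) • φ (y i)‖ := norm_sum_le _ _
    _ ≤ ∑ _i : Fin 4, ‖(1 : M)‖ * ‖x‖ := by
        refine Finset.sum_le_sum fun i _ => ?_
        simpa [norm_smul] using hb i
    _ = 4 * ‖(1 : M)‖ * ‖x‖ := by simp [mul_assoc]

variable [FiniteDimensional ℂ M]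

/-- Kadison's inequality. The images `P_r` of the spectral projections of `a` are positive and sum
to `1`, which exhibits `φ(a²) - φ(a)²` as `∑ (r - φ a) P_r (r - φ a)`. -/
theorem kadison (hφ : IsUP φ) {a : M} (ha : IsSelfAdjoint a) : φ a * φ a ≤ φ (a * a) := by
  obtain ⟨S, q, hq, h1, ha1, ha2⟩ := exists_spectral_polynomials a ha
  set P : ℝ → M := fun r => φ (Polynomial.aeval a (q r)) with hP
  have hsm : ∀ (r : ℝ) (x : M), φ (r • x) = r • φ x := fun r x => φ.map_smul_of_tower r x
  have hP0 : ∀ r ∈ S, 0 ≤ P r := fun r hr => hφ.map_nonneg _ (hq r hr).1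
  have e1 : ∑ r ∈ S, P r = 1 := by rw [← hφ.map_one, ← h1, map_sum]
  have e2 : ∑ r ∈ S, r • P r = φ a := by
    conv_rhs => rw [← ha1]
    simp only [map_sum, hsm, hP]
  have e3 : ∑ r ∈ S, (r ^ 2) • P r = φ (a * a) := by
    rw [← ha2]
    simp only [map_sum, hsm, hP]
  have hsa : star (φ a) = φ a := by rw [← hφ.map_star, ha.star_eq]
  have key : φ (a * a) - φ a * φ a =
      ∑ r ∈ S, star (r • (1 : M) - φ a) * P r * (r • (1 : M) - φ a) := by
    have : ∀ r ∈ S, star (r • (1 : M) - φ a) * P r * (r • (1 : M) - φ a) =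
        (r ^ 2) • P r - (r • P r) * φ a - φ a * (r • P r) + φ a * P r * φ a := by
      intro r _
      simp only [star_sub, star_smul, star_one, hsa, star_trivial, sub_mul, mul_sub, smul_mul_assoc,
        mul_smul_comm, one_mul, mul_one, smul_smul, pow_two, smul_sub]
      abel
    rw [Finset.sum_congr rfl this, Finset.sum_add_distrib, Finset.sum_sub_distrib,
      Finset.sum_sub_distrib, ← Finset.sum_mul, ← Finset.mul_sum, ← Finset.sum_mul,
      ← Finset.mul_sum, e1, e2, e3]
    simp
  rw [← sub_nonneg, key]
  exact Finset.sum_nonneg fun r hr => star_left_conjugate_nonneg (hP0 r hr) _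

/-- Kadison's inequality for arbitrary elements: for self-adjoint `a`, `b` the defect of `a + i b`
is the sum of the defects of `a` and `b`. -/
theorem defect_nonneg (hφ : IsUP φ) (x : M) : 0 ≤ defect φ x := by
  have hpar : ∀ a b : M, star a = a → star b = b →
      jordan (star (a + Complex.I • b)) (a + Complex.I • b) = a * a + b * b := by
    intro a b ha hb
    have h2 : (2⁻¹ : ℂ) • ((a * a + b * b) + (a * a + b * b)) = a * a + b * b := by
      rw [← two_smul ℂ, smul_smul]; norm_num
    rw [jordan, ← h2]
    congr 1
    simp only [star_add, star_smul, ha, hb, Complex.star_def, Complex.conj_I, add_mul, mul_add,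
      smul_mul_assoc, mul_smul_comm, smul_smul, smul_add, neg_smul, neg_mul, mul_neg,
      Complex.I_mul_I, smul_neg, one_smul, neg_neg]
    abel
  have ha := (realPart x).2
  have hb := (imaginaryPart x).2
  set a : M := (realPart x : M)
  set b : M := (imaginaryPart x : M)
  have hx : x = a + Complex.I • b := (realPart_add_I_smul_imaginaryPart x).symm
  have ha' : star a = a := ha
  have hb' : star b = b := hb
  rw [defect, hx, hpar a b ha' hb', map_add φ a, map_smul, hpar (φ a) (φ b)
    (by rw [← hφ.map_star, ha']) (by rw [← hφ.map_star, hb']), map_add, sub_nonneg]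
  exact add_le_add (hφ.kadison ha) (hφ.kadison hb)

/-! ### The definite set and `B_φ` -/

theorem defect_add_add_defect_sub (φ : M →ₗ[ℂ] M) (x y : M) :
    defect φ (x + y) + defect φ (x - y) = (2 : ℂ) • defect φ x + (2 : ℂ) • defect φ y := by
  have h : ∀ x y : M, jordan (star (x + y)) (x + y) + jordan (star (x - y)) (x - y) =
      (2 : ℂ) • jordan (star x) x + (2 : ℂ) • jordan (star y) y := by
    intro x y
    simp only [jordan, star_add, star_sub, add_mul, mul_add, sub_mul, mul_sub]
    module
  have h1 := congrArg φ (h x y)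
  have h2 := h (φ x) (φ y)
  simp only [map_add, map_smul] at h1
  simp only [defect, map_add, map_sub]
  rw [sub_add_sub_comm, h1, h2]
  module

/-- The definite set as a subspace. Closure under sums comes from the parallelogram law for the
nonnegative defect. -/
noncomputable def definiteSubmodule (hφ : IsUP φ) : Submodule ℂ M where
  carrier := definiteSet φ
  zero_mem' := by simp [definiteSet, jordan]
  add_mem' := by
    intro x y hx hy
    rw [mem_definiteSet_iff_s11] at *
    have h := defect_add_add_defect_sub φ x y
    rw [hx, hy, smul_zero, add_zero] at h
    refine le_antisymm ?_ (hφ.defect_nonneg _)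
    rw [← h]
    exact le_add_of_nonneg_right (hφ.defect_nonneg _)
  smul_mem' := by
    intro c x hx
    have h : ∀ x : M, jordan (star (c • x)) (c • x) = (star c * c) • jordan (star x) x := by
      intro x
      simp only [jordan, star_smul, smul_mul_assoc, mul_smul_comm]
      module
    change φ _ = _ at hx
    change φ _ = _
    rw [h, map_smul, map_smul, h, hx]

theorem star_mem_definiteSet (hφ : IsUP φ) {x : M} (hx : x ∈ definiteSet φ) :
    star x ∈ definiteSet φ := by
  change φ _ = _ at hx
  change φ _ = _
  rw [hφ.map_star, star_star, star_star, jordan_comm, hx, jordan_comm]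

theorem map_mul_self_of_mem (hφ : IsUP φ) {x : M} (hs : star x = x) (hx : x ∈ definiteSet φ) :
    φ (x * x) = φ x * φ x := by
  change φ _ = _ at hx
  rwa [← hφ.map_star, hs, jordan_self, jordan_self] at hx

theorem mem_of_map_mul_self (hφ : IsUP φ) {x : M} (hs : star x = x)
    (hx : φ (x * x) = φ x * φ x) : x ∈ definiteSet φ := by
  change φ _ = _
  rwa [← hφ.map_star, hs, jordan_self, jordan_self]

/-- Cauchy–Schwarz for the defect form: `φ` respects Jordan products with definite elements. -/
theorem map_jordan_of_mem (hφ : IsUP φ) {x y : M} (hs : star x = x) (hx : x ∈ definiteSet φ)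
    (hy : star y = y) : φ (x * y + y * x) = φ x * φ y + φ y * φ x := by
  rw [← sub_eq_zero]
  refine eq_zero_of_forall_add_smul_nonneg (a := φ (y * y) - φ y * φ y) fun t => ?_
  have hsa : IsSelfAdjoint (y + t • x) := by
    simp [isSelfAdjoint_iff, hs, hy]
  have h := sub_nonneg.2 (hφ.kadison hsa)
  have hx' := hφ.map_mul_self_of_mem hs hx
  have hsm : ∀ (r : ℝ) (x : M), φ (r • x) = r • φ x := fun r x => φ.map_smul_of_tower r x
  convert h using 1
  simp only [add_mul, mul_add, map_add, hsm, smul_mul_assoc, mul_smul_comm, hx']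
  module

theorem map_pow_of_mem (hφ : IsUP φ) {x : M} (hs : star x = x) (hx : x ∈ definiteSet φ)
    (k : ℕ) : φ (x ^ k) = φ x ^ k := by
  induction k with
  | zero => simpa using hφ.map_one
  | succ k ih =>
    have h := hφ.map_jordan_of_mem (y := x ^ k) hs hx (by rw [star_pow, hs])
    rw [ih, ← pow_succ, ← pow_succ', ← pow_succ, ← pow_succ', map_add, ← two_smul ℂ,
      ← two_smul ℂ (φ x ^ (k + 1))] at h
    exact smul_right_injective M (two_ne_zero' ℂ) h

theorem pow_mem_of_mem (hφ : IsUP φ) {x : M} (hs : star x = x) (hx : x ∈ definiteSet φ)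
    (k : ℕ) : x ^ k ∈ definiteSet φ := by
  refine hφ.mem_of_map_mul_self (by rw [star_pow, hs]) ?_
  rw [← pow_add, hφ.map_pow_of_mem hs hx, hφ.map_pow_of_mem hs hx, pow_add]

/-- `B_φ` as a subspace. -/
noncomputable def BSubmodule (hφ : IsUP φ) : Submodule ℂ M :=
  ⨅ n : ℕ, hφ.definiteSubmodule.comap (φ ^ n)

theorem mem_BSubmodule (hφ : IsUP φ) {x : M} :
    x ∈ hφ.BSubmodule ↔ ∀ n : ℕ, (φ ^ n) x ∈ definiteSet φ := by
  simp only [BSubmodule, Submodule.mem_iInf, Submodule.mem_comap]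
  rfl

theorem coe_BSubmodule (hφ : IsUP φ) : (hφ.BSubmodule : Set M) = Bset φ :=
  Set.ext fun _ => hφ.mem_BSubmodule

theorem star_mem_B (hφ : IsUP φ) {x : M} (hx : x ∈ hφ.BSubmodule) : star x ∈ hφ.BSubmodule := by
  rw [mem_BSubmodule] at *
  intro n
  rw [(hφ.pow n).map_star]
  exact hφ.star_mem_definiteSet (hx n)

theorem pow_map_pow (hφ : IsUP φ) {x : M} (hs : star x = x) (hx : x ∈ hφ.BSubmodule)
    (n k : ℕ) : (φ ^ n) (x ^ k) = (φ ^ n) x ^ k := by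
  induction n with
  | zero => rfl
  | succ n ih =>
    rw [pow_succ', Module.End.mul_apply, Module.End.mul_apply, ih]
    refine hφ.map_pow_of_mem ?_ (hφ.mem_BSubmodule.1 hx n) k
    rw [← (hφ.pow n).map_star, hs]

theorem pow_mem_B (hφ : IsUP φ) {x : M} (hs : star x = x) (hx : x ∈ hφ.BSubmodule) (k : ℕ) :
    x ^ k ∈ hφ.BSubmodule := by
  rw [mem_BSubmodule]
  intro n
  rw [hφ.pow_map_pow hs hx]
  refine hφ.pow_mem_of_mem ?_ (hφ.mem_BSubmodule.1 hx n) k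
  rw [← (hφ.pow n).map_star, hs]

theorem aeval_mem_B (hφ : IsUP φ) {x : M} (hs : star x = x) (hx : x ∈ hφ.BSubmodule)
    (p : Polynomial ℝ) : Polynomial.aeval x p ∈ hφ.BSubmodule := by
  rw [Polynomial.aeval_eq_sum_range]
  exact Submodule.sum_mem _ fun i _ =>
    Submodule.smul_of_tower_mem _ _ (hφ.pow_mem_B hs hx i)

/-- Injectivity of `φ` on `B_φ`: if `φ x = 0` then `φ(x* ∘ x) = 0`, and `φ` is faithful. -/
theorem injOn_B (hφ : IsUP φ) (hfaith : ∀ x : M, 0 ≤ x → φ x = 0 → x = 0) {x : M}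
    (hx : x ∈ hφ.BSubmodule) (h : φ x = 0) : x = 0 := by
  have hd : φ (jordan (star x) x) = jordan (star (φ x)) (φ x) := hφ.mem_BSubmodule.1 hx 0
  refine eq_zero_of_jordan_star_self x (hfaith _ (jordan_star_self_nonneg x) ?_)
  rw [hd, h]
  simp [jordan]

theorem map_mem_B (hφ : IsUP φ) {x : M} (hx : x ∈ hφ.BSubmodule) : φ x ∈ hφ.BSubmodule := by
  rw [mem_BSubmodule] at *
  intro n
  have := hx (n + 1)
  rwa [pow_succ, Module.End.mul_apply] at this

theorem image_B (hφ : IsUP φ) (hfaith : ∀ x : M, 0 ≤ x → φ x = 0 → x = 0) (n : ℕ) :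
    (φ ^ n) '' (hφ.BSubmodule : Set M) = hφ.BSubmodule := by
  induction n with
  | zero => simp
  | succ n ih =>
    rw [pow_succ, Module.End.mul_eq_comp, LinearMap.coe_comp, Set.image_comp]
    have h1 : φ '' (hφ.BSubmodule : Set M) = hφ.BSubmodule := by
      have hinj : Function.Injective (φ.restrict fun x hx => hφ.map_mem_B hx) := by
        rw [injective_iff_map_eq_zero]
        intro x hx
        exact Subtype.ext (hφ.injOn_B hfaith x.2 (congrArg Subtype.val hx))
      refine Set.Subset.antisymm ?_ ?_
      · rintro _ ⟨x, hx, rfl⟩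
        exact hφ.map_mem_B hx
      · intro y hy
        obtain ⟨x, hx⟩ := LinearMap.injective_iff_surjective.1 hinj ⟨y, hy⟩
        exact ⟨x, x.2, congrArg Subtype.val hx⟩
    rw [h1, ih]

/-- `φ` permutes the finite-dimensional space `B_φ`, so `C_φ = B_φ`. -/
theorem multCore_eq (hφ : IsUP φ) (hfaith : ∀ x : M, 0 ≤ x → φ x = 0 → x = 0) :
    multCore φ = hφ.BSubmodule := by
  rw [multCore, ← hφ.coe_BSubmodule]
  simp only [hφ.image_B hfaith]
  exact Set.Subset.antisymm (Set.iInter₂_subset 1 le_rfl) (Set.subset_iInter₂ fun _ _ => le_rfl)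

/-! ### Projections in the tail system -/

theorem pow_faithful (hφ : IsUP φ) (hfaith : ∀ x : M, 0 ≤ x → φ x = 0 → x = 0) (n : ℕ) :
    ∀ x : M, 0 ≤ x → (φ ^ n) x = 0 → x = 0 := by
  induction n with
  | zero => exact fun x _ h => h
  | succ n ih =>
    intro x hx h
    rw [pow_succ', Module.End.mul_apply] at h
    exact ih x hx (hfaith _ ((hφ.pow n).map_nonneg x hx) h)

theorem injOn_B_pow (hφ : IsUP φ) (hfaith : ∀ x : M, 0 ≤ x → φ x = 0 → x = 0) (n : ℕ) {x : M}
    (hx : x ∈ hφ.BSubmodule) (h : (φ ^ n) x = 0) : x = 0 := by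
  induction n with
  | zero => exact h
  | succ n ih =>
    rw [pow_succ', Module.End.mul_apply] at h
    have hm : (φ ^ n) x ∈ (hφ.BSubmodule : Set M) := by
      rw [← hφ.image_B hfaith n]
      exact ⟨x, hx, rfl⟩
    exact ih (hφ.injOn_B hfaith hm h)

theorem norm_projection_le {e : M} (hs : star e = e) (he : e * e = e) : ‖e‖ ≤ 1 :=
  (CStarAlgebra.mem_Icc_iff_norm_le_one.1 (mem_Icc_of_projection hs he)).2

/-- A projection in `B_φ` has projections as preimages under all powers of `φ`. -/
theorem mem_tail_of_mem_B (hφ : IsUP φ) (hfaith : ∀ x : M, 0 ≤ x → φ x = 0 → x = 0) {e : M}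
    (hB : e ∈ hφ.BSubmodule) (hs : star e = e) (he : e * e = e) : e ∈ tailSystem φ := by
  refine ⟨1, one_pos, fun n _ => ?_⟩
  have hB' : e ∈ (hφ.BSubmodule : Set M) := hB
  rw [← hφ.image_B hfaith n] at hB'
  obtain ⟨y, hy, hye⟩ := hB'
  have hys : star y = y := by
    rw [← sub_eq_zero]
    refine hφ.injOn_B_pow hfaith n (sub_mem (hφ.star_mem_B hy) hy) ?_
    rw [map_sub, (hφ.pow n).map_star, hye, hs, sub_self]
  have hyy : y * y = y := by
    rw [← sub_eq_zero, ← pow_two]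
    refine hφ.injOn_B_pow hfaith n (sub_mem (hφ.pow_mem_B hys hy 2) hy) ?_
    rw [map_sub, hφ.pow_map_pow hys hy, hye, pow_two, he, sub_self]
  exact ⟨y, norm_projection_le hys hyy, hye⟩

/-- Preimages of projections in the order interval `[0, 1]` are projections: Kadison's inequality
and `x² ≤ x` squeeze `φ(x²)` between `φ x` and itself, so faithfulness kills `x - x²`. -/
theorem isProj_of_map (hφ : IsUP φ) (hfaith : ∀ x : M, 0 ≤ x → φ x = 0 → x = 0) {x : M}
    (h0 : 0 ≤ x) (h1 : x ≤ 1) (he : φ x * φ x = φ x) : x * x = x := by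
  have hxx := sq_le_self_of_mem_Icc h0 h1
  have hk := hφ.kadison (IsSelfAdjoint.of_nonneg h0)
  rw [he] at hk
  have := hfaith (x - x * x) (sub_nonneg.2 hxx)
    (by rw [map_sub, sub_eq_zero]; exact le_antisymm hk (hφ.mono hxx))
  exact (sub_eq_zero.1 this).symm

/-- The powers of `φ` form a bounded sequence in a finite-dimensional operator space, so far-apart
powers come arbitrarily close to each other in operator norm. -/
theorem exists_pow_close (hφ : IsUP φ) (N : ℕ) {ε : ℝ} (hε : 0 < ε) :
    ∃ k l : ℕ, 1 ≤ k ∧ k + N ≤ l ∧ ∀ x : M, ‖(φ ^ l) x - (φ ^ k) x‖ ≤ ε * ‖x‖ := by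
  have hp : ProperSpace (M →L[ℂ] M) := FiniteDimensional.proper ℂ _
  set T : ℕ → (M →L[ℂ] M) := fun n => LinearMap.toContinuousLinearMap (φ ^ n) with hT
  have hmem : ∀ n, T n ∈ Metric.closedBall (0 : M →L[ℂ] M) (4 * ‖(1 : M)‖) := fun n => by
    rw [mem_closedBall_zero_iff]
    exact ContinuousLinearMap.opNorm_le_bound _ (by positivity) fun x => (hφ.pow n).norm_le x
  obtain ⟨L, -, s, hs, hL⟩ := (isCompact_closedBall _ _).tendsto_subseq hmem
  obtain ⟨n₀, hn₀⟩ := Metric.cauchySeq_iff.1 hL.cauchySeq ε hε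
  refine ⟨s (n₀ + 1), s (N + (n₀ + 1)), (Nat.le_add_left 1 n₀).trans (hs.le_apply), ?_,
    fun x => ?_⟩
  · rw [add_comm]
    exact hs.add_le_nat N (n₀ + 1)
  have h := (hn₀ (N + (n₀ + 1)) (by omega) (n₀ + 1) (by omega)).le
  rw [dist_eq_norm] at h
  exact ((T (s (N + (n₀ + 1))) - T (s (n₀ + 1))).le_opNorm x).trans (by gcongr; exact h)

theorem map_mem_tail (hφ : IsUP φ) {e : M} (he : e ∈ tailSystem φ) : φ e ∈ tailSystem φ := by
  obtain ⟨C, hC, h⟩ := he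
  refine ⟨4 * ‖(1 : M)‖ * C + 1, by positivity, fun n hn => ?_⟩
  obtain ⟨x, hx, hxe⟩ := h n hn
  refine ⟨φ x, (hφ.norm_le x).trans ?_, ?_⟩
  · have : 4 * ‖(1 : M)‖ * ‖x‖ ≤ 4 * ‖(1 : M)‖ * C := by gcongr
    linarith
  · rw [← Module.End.mul_apply, ← pow_succ, pow_succ', Module.End.mul_apply, hxe]

/-- Tail elements are recurrent: if `e = φ^k x` with `x` bounded independently of `k`, then
`φ^(l-k) e - e = (φ^l - φ^k) x` is small whenever `φ^l` is close to `φ^k`. -/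
theorem exists_recurrence (hφ : IsUP φ) {e : M} (he : e ∈ tailSystem φ) (N : ℕ) {ε : ℝ}
    (hε : 0 < ε) : ∃ m ≥ N, ‖(φ ^ m) e - e‖ < ε := by
  obtain ⟨C, hC, h⟩ := he
  obtain ⟨k, l, hk, hkl, hb⟩ := hφ.exists_pow_close N (ε := ε / (2 * C)) (by positivity)
  obtain ⟨x, hx, hxe⟩ := h k hk
  refine ⟨l - k, by omega, ?_⟩
  have hl : (φ ^ (l - k)) e = (φ ^ l) x := by
    rw [← hxe, ← Module.End.mul_apply, ← pow_add, Nat.sub_add_cancel (by omega)]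
  calc ‖(φ ^ (l - k)) e - e‖ = ‖(φ ^ l) x - (φ ^ k) x‖ := by rw [hl, hxe]
    _ ≤ ε / (2 * C) * ‖x‖ := hb x
    _ ≤ ε / (2 * C) * C := by gcongr
    _ = ε / 2 := by field_simp
    _ < ε := half_lt_self hε

/-- A tail element of `[0, 1]` has preimages in `[0, 1]` under every power of `φ`: by recurrence it
lies in the closure of the compact set `φ^n [0, 1]`. -/
theorem exists_preimage_Icc (hφ : IsUP φ) {e : M} (he : e ∈ tailSystem φ) (h0 : 0 ≤ e)
    (h1 : e ≤ 1) (n : ℕ) : ∃ x : M, 0 ≤ x ∧ x ≤ 1 ∧ (φ ^ n) x = e := by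
  have hp : ProperSpace M := FiniteDimensional.proper ℂ M
  have hcpt : IsCompact (Set.Icc (0 : M) 1) :=
    (isCompact_closedBall (0 : M) 1).of_isClosed_subset isClosed_Icc fun x hx =>
      mem_closedBall_zero_iff.2 (CStarAlgebra.mem_Icc_iff_norm_le_one.1 hx).2
  have hcl : IsClosed ((φ ^ n) '' Set.Icc (0 : M) 1) :=
    (hcpt.image (LinearMap.continuous_of_finiteDimensional (φ ^ n))).isClosed
  have hmem : e ∈ closure ((φ ^ n) '' Set.Icc (0 : M) 1) := by
    rw [Metric.mem_closure_iff]
    intro ε hε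
    obtain ⟨m, hm, hme⟩ := hφ.exists_recurrence he n hε
    refine ⟨(φ ^ m) e, ⟨(φ ^ (m - n)) e, (hφ.pow _).map_Icc h0 h1, ?_⟩, ?_⟩
    · rw [← Module.End.mul_apply, ← pow_add, Nat.add_sub_cancel' hm]
    · rwa [dist_comm, dist_eq_norm]
  rw [hcl.closure_eq] at hmem
  obtain ⟨x, hx, hxe⟩ := hmem
  exact ⟨x, hx.1, hx.2, hxe⟩

/-- `φ` maps tail projections to projections: `φ e` is a limit of elements of `[0, 1]` that some
power of `φ` sends to `e`, and these are projections. -/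
theorem map_proj (hφ : IsUP φ) (hfaith : ∀ x : M, 0 ≤ x → φ x = 0 → x = 0) {e : M}
    (he : e ∈ tailSystem φ) (hs : star e = e) (hee : e * e = e) : φ e * φ e = φ e := by
  have hcl : IsClosed {p : M | p * p = p} :=
    isClosed_eq (continuous_id.mul continuous_id) continuous_id
  suffices h : φ e ∈ closure {p : M | p * p = p} by
    rwa [hcl.closure_eq] at h
  rw [Metric.mem_closure_iff]
  intro ε hε
  obtain ⟨k, l, -, hkl, hb⟩ := hφ.exists_pow_close 1 (half_pos hε)
  obtain ⟨he0, he1⟩ := mem_Icc_of_projection hs hee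
  obtain ⟨x, hx0, hx1, hx⟩ := hφ.exists_preimage_Icc he he0 he1 (l - 1)
  have hxn : ‖x‖ ≤ 1 := (CStarAlgebra.mem_Icc_iff_norm_le_one.1 ⟨hx0, hx1⟩).2
  refine ⟨(φ ^ k) x, ?_, ?_⟩
  · obtain ⟨hy0, hy1⟩ := (hφ.pow k).map_Icc hx0 hx1
    refine (hφ.pow (l - 1 - k)).isProj_of_map (hφ.pow_faithful hfaith _) hy0 hy1 ?_
    rw [← Module.End.mul_apply, ← pow_add, Nat.sub_add_cancel (by omega), hx, hee]
  · have hl : φ e = (φ ^ l) x := by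
      rw [← hx, ← Module.End.mul_apply, ← pow_succ', Nat.sub_add_cancel (by omega)]
    rw [dist_eq_norm, hl]
    calc _ ≤ ε / 2 * ‖x‖ := hb x
      _ ≤ ε / 2 * 1 := by gcongr
      _ < ε := by linarith

/-- The whole forward orbit of a tail projection consists of projections, on which `φ` preserves
squares. -/
theorem mem_B_of_mem_tail (hφ : IsUP φ) (hfaith : ∀ x : M, 0 ≤ x → φ x = 0 → x = 0) {e : M}
    (he : e ∈ tailSystem φ) (hs : star e = e) (hee : e * e = e) : e ∈ hφ.BSubmodule := by
  have hall : ∀ n : ℕ, (φ ^ n) e ∈ tailSystem φ ∧ star ((φ ^ n) e) = (φ ^ n) e ∧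
      (φ ^ n) e * (φ ^ n) e = (φ ^ n) e := by
    intro n
    induction n with
    | zero => exact ⟨he, hs, hee⟩
    | succ n ih =>
      rw [pow_succ', Module.End.mul_apply]
      exact ⟨hφ.map_mem_tail ih.1, by rw [← hφ.map_star, ih.2.1],
        hφ.map_proj hfaith ih.1 ih.2.1 ih.2.2⟩
  rw [mem_BSubmodule]
  intro n
  obtain ⟨h1, h2, h3⟩ := hall n
  refine hφ.mem_of_map_mul_self h2 ?_
  rw [h3, hφ.map_proj hfaith h1 h2 h3]

/-- A self-adjoint element of `B_φ` is a combination of its spectral projections; these are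
polynomials in it, hence lie in `B_φ`, hence in the tail system. -/
theorem mem_span_of_selfAdjoint (hφ : IsUP φ) (hfaith : ∀ x : M, 0 ≤ x → φ x = 0 → x = 0)
    {x : M} (hs : star x = x) (hx : x ∈ hφ.BSubmodule) :
    x ∈ Submodule.span ℂ {e : M | e ∈ tailSystem φ ∧ star e = e ∧ e * e = e} := by
  obtain ⟨S, q, hq, -, hsum, -⟩ := exists_spectral_polynomials x hs
  rw [← hsum]
  refine Submodule.sum_mem _ fun r hr => Submodule.smul_of_tower_mem _ r ?_
  have hsa : star (Polynomial.aeval x (q r)) = Polynomial.aeval x (q r) :=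
    IsSelfAdjoint.of_nonneg (hq r hr).1
  exact Submodule.subset_span
    ⟨hφ.mem_tail_of_mem_B hfaith (hφ.aeval_mem_B hs hx _) hsa (hq r hr).2, hsa, (hq r hr).2⟩

end IsUP
end UP

/-- for a faithful UP map on a finite-dimensional C*-algebra, the
multiplicative core is the linear span of the projections lying in the tail system. -/
theorem multCore_eq_span_of_projections
    {M : Type*} [CStarAlgebra M] [PartialOrder M] [StarOrderedRing M]
    [FiniteDimensional ℂ M]
    (φ : M →ₗ[ℂ] M) (hunit : φ 1 = 1)
    (hpos : ∀ x : M, 0 ≤ x → 0 ≤ φ x)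
    (hfaith : ∀ x : M, 0 ≤ x → φ x = 0 → x = 0) :
    multCore φ =
      ↑(Submodule.span ℂ {e : M | e ∈ tailSystem φ ∧ star e = e ∧ e * e = e}) := by
  have hφ : IsUP φ := ⟨hunit, hpos⟩
  rw [hφ.multCore_eq hfaith]
  refine Set.Subset.antisymm (fun x hx => ?_) ?_
  · have hre : (realPart x : M) ∈ hφ.BSubmodule := by
      rw [realPart_apply_coe]
      exact Submodule.smul_of_tower_mem _ _ (add_mem hx (hφ.star_mem_B hx))
    have him : (imaginaryPart x : M) ∈ hφ.BSubmodule := by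
      rw [imaginaryPart_apply_coe]
      exact Submodule.smul_mem _ _
        (Submodule.smul_of_tower_mem _ _ (sub_mem hx (hφ.star_mem_B hx)))
    rw [← realPart_add_I_smul_imaginaryPart x]
    exact add_mem (hφ.mem_span_of_selfAdjoint hfaith (realPart x).2 hre)
      (Submodule.smul_mem _ _ (hφ.mem_span_of_selfAdjoint hfaith (imaginaryPart x).2 him))
  · exact Submodule.span_le.2 fun e he => hφ.mem_B_of_mem_tail hfaith he.1 he.2.1 he.2.2
end
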